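/- arXiv:math-ph/0205028 — 3 statements merged into one kernel-verified Lean document; each statement's English description precedes it below -/
import Mathlib

section
/- Let μ_A(φ) = det(A)/πⁿ · exp(-⟨φ,Aφ̄⟩) and μ_B similarly, for matrices A, B on ℂⁿ with positive-definite real parts. Then the convolution satisfies ∫_{ℂⁿ} μ_A(u−v) μ_B(v) dv = μ_C(u) where C⁻¹ = A⁻¹ + B⁻¹. -/
/-!
Substituting the two densities, the exponent of the integrand is
`-v M v* + (u A) v* + v (A u*) - u A u*` with `M = A + B`, so everything reduces to the Gaussian
integral `∫ exp(-v M v* + a v* + v b) dv = πⁿ / det M * exp(a M⁻¹ b)` (`integral_cexp_matrix`),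
where the row vector `a` and the column vector `b` are independent of each other. The result then
follows from `C = A M⁻¹ B = A - A M⁻¹ A`.

Since `a` and `b*` may differ, completing the square would require a contour shift. Instead, `M` is
brought to diagonal form by a congruence `S M S*` (`exists_conj_diagonal`), which is possible
because its Hermitian part is positive definite. The substitution `v = w S`, of real Jacobian
`|det S|²`, turns the integral into a product of integrals over `ℂ`, and each of these is a product
of two one-dimensional Gaussian integrals in the real and imaginary parts
(`integral_cexp_complex`).
-/

open scoped Real
open Complex

/-- The normalized complex Gaussian density on `ℂⁿ` with covariance `A⁻¹`. -/
noncomputable def gaussDensity (n : ℕ) (A : Matrix (Fin n) (Fin n) ℂ) (φ : Fin n → ℂ) : ℂ :=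
  (A.det / (π : ℂ) ^ n) *
    Complex.exp (-(∑ x, ∑ y, φ x * A x y * (starRingEnd ℂ) (φ y)))

open MeasureTheory Matrix

lemma integral_cexp_complex {c : ℂ} (hc : 0 < c.re) (a b : ℂ) :
    ∫ z : ℂ, cexp (-(c * (z * (starRingEnd ℂ) z)) + a * (starRingEnd ℂ) z + z * b) =
      π / c * cexp (a * b / c) := by
  have hc0 : c ≠ 0 := by rintro rfl; simp at hc
  have hb : (-c).re < 0 := by simpa using hc
  rw [← (Complex.volume_preserving_equiv_real_prod.symm).integral_comp
    measurableEquivRealProd.symm.measurableEmbedding]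
  have h : ∀ p : ℝ × ℝ,
      cexp (-(c * (measurableEquivRealProd.symm p *
          (starRingEnd ℂ) (measurableEquivRealProd.symm p)))
        + a * (starRingEnd ℂ) (measurableEquivRealProd.symm p)
        + measurableEquivRealProd.symm p * b) =
      cexp (-c * (p.1 : ℂ) ^ 2 + (a + b) * p.1 + 0) *
        cexp (-c * (p.2 : ℂ) ^ 2 + (I * (b - a)) * p.2 + 0) := by
    rintro ⟨x, y⟩
    have hz : measurableEquivRealProd.symm (x, y) = (x : ℂ) + y * I := by
      apply Complex.ext <;> simp [measurableEquivRealProd]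
    rw [hz, ← Complex.exp_add]
    congr 1
    simp only [map_add, map_mul, conj_ofReal, conj_I]
    linear_combination (c * y ^ 2) * I_sq
  simp_rw [h]
  rw [Measure.volume_eq_prod, integral_prod_mul (fun x : ℝ => cexp (-c * (x : ℂ) ^ 2 + (a + b) * x + 0))
    (fun y : ℝ => cexp (-c * (y : ℂ) ^ 2 + (I * (b - a)) * y + 0)),
    integral_cexp_quadratic hb, integral_cexp_quadratic hb, mul_mul_mul_comm, ← Complex.exp_add,
    neg_neg, ← sq, ← Complex.cpow_nat_mul]
  congr 1
  · norm_num
  · congr 1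
    field_simp
    linear_combination (-(b - a) ^ 2) * I_sq * (-1)

lemma integral_cexp_diagonal {n : ℕ} {c : Fin n → ℂ} (hc : ∀ i, 0 < (c i).re)
    (a b : Fin n → ℂ) :
    ∫ w : Fin n → ℂ, cexp (-(w ⬝ᵥ diagonal c *ᵥ star w) + a ⬝ᵥ star w + w ⬝ᵥ b) =
      (π : ℂ) ^ n / (diagonal c).det * cexp (a ⬝ᵥ (diagonal c)⁻¹ *ᵥ b) := by
  have h0 : ∀ i, c i ≠ 0 := fun i h => by simpa [h] using hc i
  have hinv : (diagonal c)⁻¹ = diagonal (fun i => (c i)⁻¹) := by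
    apply Matrix.inv_eq_right_inv
    simp [diagonal_mul_diagonal, h0]
  have h : ∀ w : Fin n → ℂ,
      cexp (-(w ⬝ᵥ diagonal c *ᵥ star w) + a ⬝ᵥ star w + w ⬝ᵥ b) =
      ∏ i, cexp (-(c i * (w i * (starRingEnd ℂ) (w i))) + a i * (starRingEnd ℂ) (w i)
        + w i * b i) := by
    intro w
    rw [← Complex.exp_sum]
    congr 1
    simp only [dotProduct, mulVec_diagonal, Finset.sum_add_distrib, Finset.sum_neg_distrib,
      Pi.star_apply, RCLike.star_def]
    congr 3
    exact Finset.sum_congr rfl fun i _ => by ring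
  simp_rw [h]
  rw [integral_fintype_prod_volume_eq_prod (f := fun i z =>
    cexp (-(c i * (z * (starRingEnd ℂ) z)) + a i * (starRingEnd ℂ) z + z * b i))]
  simp_rw [integral_cexp_complex (hc _)]
  rw [Finset.prod_mul_distrib, ← Complex.exp_sum, hinv, det_diagonal, Finset.prod_div_distrib]
  simp only [Finset.prod_const, Finset.card_univ, Fintype.card_fin]
  congr 2
  simp only [dotProduct, mulVec_diagonal]
  exact Finset.sum_congr rfl fun i _ => by ring

/-- Complex-linear change of variables: the Jacobian of `w ↦ w S` as a real-linear map is
`|det S|²`. -/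
lemma integral_comp_vecMul {n : ℕ} (S : Matrix (Fin n) (Fin n) ℂ) (hS : S.det ≠ 0)
    (f : (Fin n → ℂ) → ℂ) :
    ∫ v, f v = (S.det * star S.det) * ∫ w, f (w ᵥ* S) := by
  let L : (Fin n → ℂ) →ₗ[ℝ] (Fin n → ℂ) := (Matrix.toLin' Sᵀ).restrictScalars ℝ
  have hL : ∀ w, L w = w ᵥ* S := fun w => by simp [L, mulVec_transpose]
  have hdet : L.det = Complex.normSq S.det := by
    simp [L, LinearMap.det_restrictScalars, Algebra.norm_complex_eq]
  have hinj : Function.Injective L := by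
    intro x y hxy
    rw [hL, hL] at hxy
    exact (Matrix.vecMul_injective_iff_isUnit.2
      ((Matrix.isUnit_iff_isUnit_det _).2 hS.isUnit)) hxy
  have hsurj : Function.Surjective L := LinearMap.injective_iff_surjective.1 hinj
  have key := integral_image_eq_integral_abs_det_fderiv_smul (volume : Measure (Fin n → ℂ))
    (s := Set.univ) (f := L) (f' := fun _ => L.toContinuousLinearMap) MeasurableSet.univ
    (fun x _ => L.toContinuousLinearMap.hasFDerivAt.hasFDerivWithinAt) hinj.injOn f
  rw [Set.image_univ, hsurj.range_eq, setIntegral_univ, setIntegral_univ] at key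
  rw [key, integral_smul]
  simp only [hL, ContinuousLinearMap.det, LinearMap.coe_toContinuousLinearMap, hdet]
  rw [abs_of_nonneg (Complex.normSq_nonneg _), RCLike.star_def, Complex.mul_conj]
  simp

/-- The sesquilinear form of the statement in matrix notation, `φ M φ*`. -/
lemma form_eq {n : ℕ} (M : Matrix (Fin n) (Fin n) ℂ) (φ : Fin n → ℂ) :
    ∑ x, ∑ y, φ x * M x y * (starRingEnd ℂ) (φ y) = φ ⬝ᵥ M *ᵥ star φ := by
  simp [dotProduct, mulVec, Finset.mul_sum, mul_assoc]

lemma det_ne_zero_of_re_pos {n : ℕ} {M : Matrix (Fin n) (Fin n) ℂ}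
    (hM : ∀ φ : Fin n → ℂ, φ ≠ 0 → 0 < (φ ⬝ᵥ M *ᵥ star φ).re) : M.det ≠ 0 := by
  intro h
  obtain ⟨v, hv, h0⟩ := Matrix.exists_mulVec_eq_zero_iff.2 h
  have := hM (star v) (by simpa using hv)
  simp [h0] at this

open scoped MatrixOrder ComplexOrder Matrix.Norms.L2Operator in
lemma exists_conj_eq_one {n : ℕ} {H : Matrix (Fin n) (Fin n) ℂ} (hH : H.PosDef) :
    ∃ R : Matrix (Fin n) (Fin n) ℂ, R.det ≠ 0 ∧ R * H * Rᴴ = 1 := by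
  obtain ⟨Q, hQ, rfl⟩ := CStarAlgebra.isStrictlyPositive_iff_eq_star_mul_self.mp
    hH.isStrictlyPositive
  have hd : IsUnit Q.det := (Matrix.isUnit_iff_isUnit_det _).1 hQ
  have hd' : IsUnit Qᴴ.det := by rw [det_conjTranspose]; exact hd.star
  refine ⟨(Qᴴ)⁻¹, ?_, ?_⟩
  · exact ((Matrix.isUnit_nonsing_inv_det_iff).2 hd').ne_zero
  · rw [star_eq_conjTranspose, ← mul_assoc, nonsing_inv_mul _ hd', one_mul,
      conjTranspose_nonsing_inv, conjTranspose_conjTranspose, mul_nonsing_inv _ hd]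

lemma exists_unitary_conj_diagonal {n : ℕ} {K : Matrix (Fin n) (Fin n) ℂ}
    (hK : K.IsHermitian) :
    ∃ (U : Matrix (Fin n) (Fin n) ℂ) (d : Fin n → ℝ),
      Uᴴ * U = 1 ∧ Uᴴ * K * U = diagonal (fun i => (d i : ℂ)) := by
  have hUU : (hK.eigenvectorUnitary : Matrix (Fin n) (Fin n) ℂ)ᴴ * hK.eigenvectorUnitary = 1 :=
    Unitary.coe_star_mul_self _
  refine ⟨hK.eigenvectorUnitary, hK.eigenvalues, hUU, ?_⟩
  have hsp := hK.spectral_theorem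
  rw [Unitary.conjStarAlgAut_apply, star_eq_conjTranspose] at hsp
  generalize (hK.eigenvectorUnitary : Matrix (Fin n) (Fin n) ℂ) = U at hsp hUU ⊢
  generalize hK.eigenvalues = d at hsp ⊢
  rw [hsp]
  simp only [mul_assoc]
  rw [hUU, mul_one, ← mul_assoc, hUU, one_mul]
  rfl

open scoped ComplexOrder in
/-- Write `M = (H + iK) / 2` with `H = M + M*` positive definite and `K` Hermitian. Reducing `H` to
the identity by a congruence and then diagonalizing the transformed `K` by a unitary makes `M`
diagonal, with entries `(1 + i d) / 2` for real `d`, whence the positive real parts. -/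
lemma exists_conj_diagonal {n : ℕ} {M : Matrix (Fin n) (Fin n) ℂ}
    (hM : ∀ φ : Fin n → ℂ, φ ≠ 0 → 0 < (φ ⬝ᵥ M *ᵥ star φ).re) :
    ∃ (S : Matrix (Fin n) (Fin n) ℂ) (c : Fin n → ℂ),
      S.det ≠ 0 ∧ (∀ i, 0 < (c i).re) ∧ S * M * Sᴴ = diagonal c := by
  have hstar : ∀ φ : Fin n → ℂ, φ ⬝ᵥ Mᴴ *ᵥ star φ = star (φ ⬝ᵥ M *ᵥ star φ) := by
    intro φ
    rw [← star_dotProduct_star, star_mulVec, star_star, ← dotProduct_mulVec]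
  have hH : (M + Mᴴ).PosDef := by
    refine Matrix.PosDef.of_dotProduct_mulVec_pos (by simp [IsHermitian, add_comm]) fun x hx => ?_
    have h1 := hM (star x) (by simpa using hx)
    have h2 := hstar (star x)
    rw [star_star] at h1 h2
    rw [add_mulVec, dotProduct_add, h2, RCLike.star_def, Complex.add_conj]
    exact_mod_cast mul_pos two_pos h1
  obtain ⟨R, hR, hR1⟩ := exists_conj_eq_one hH
  have hK : ((-I) • (R * (M - Mᴴ) * Rᴴ)).IsHermitian := by
    simp only [IsHermitian, conjTranspose_smul, conjTranspose_mul, conjTranspose_sub,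
      conjTranspose_conjTranspose, star_neg, RCLike.star_def, conj_I, neg_neg]
    rw [← neg_sub M, neg_mul, mul_neg, smul_neg, neg_smul, mul_assoc]
  obtain ⟨U, d, hUU, hUK⟩ := exists_unitary_conj_diagonal hK
  have hD : Uᴴ * (R * (M - Mᴴ) * Rᴴ) * U = I • diagonal (fun i => (d i : ℂ)) := by
    rw [← hUK, mul_smul_comm, smul_mul_assoc, smul_smul]
    simp
  have h1 : Uᴴ * (R * (M + Mᴴ) * Rᴴ) * U = 1 := by rw [hR1, mul_one, hUU]
  refine ⟨Uᴴ * R, fun i => (1 + I * d i) / 2, ?_, fun i => by simp, ?_⟩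
  · have := congrArg Matrix.det hUU
    rw [det_mul, det_one] at this
    rw [det_mul]
    exact mul_ne_zero (left_ne_zero_of_mul_eq_one this) hR
  · have hsum : M = (2 : ℂ)⁻¹ • ((M + Mᴴ) + (M - Mᴴ)) := by
      rw [add_add_sub_cancel, ← two_smul ℂ M, inv_smul_smul₀ two_ne_zero]
    have h2 : Uᴴ * R * M * (Uᴴ * R)ᴴ =
        (2 : ℂ)⁻¹ • (1 + I • diagonal (fun i => (d i : ℂ))) := by
      rw [← hD, ← h1, conjTranspose_mul, conjTranspose_conjTranspose]
      conv_lhs => rw [hsum]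
      simp only [mul_smul_comm, smul_mul_assoc, mul_add, add_mul, mul_assoc]
    rw [h2]
    ext i j
    by_cases hij : i = j
    · subst hij
      simp
      ring
    · simp [hij]

/-- The complex Gaussian integral with two independent linear terms. It is invariant under the
congruence `M ↦ S M S*`, `a ↦ a S*`, `b ↦ S b`, up to the Jacobian `|det S|²`, hence reduces to
diagonal `M`. -/
lemma integral_cexp_matrix {n : ℕ} {M : Matrix (Fin n) (Fin n) ℂ}
    (hM : ∀ φ : Fin n → ℂ, φ ≠ 0 → 0 < (φ ⬝ᵥ M *ᵥ star φ).re) (a b : Fin n → ℂ) :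
    ∫ v : Fin n → ℂ, cexp (-(v ⬝ᵥ M *ᵥ star v) + a ⬝ᵥ star v + v ⬝ᵥ b) =
      (π : ℂ) ^ n / M.det * cexp (a ⬝ᵥ M⁻¹ *ᵥ b) := by
  obtain ⟨S, c, hS, hc, hD⟩ := exists_conj_diagonal hM
  have hS' : IsUnit S.det := hS.isUnit
  have hSH : IsUnit Sᴴ.det := by rw [det_conjTranspose]; exact hS'.star
  rw [integral_comp_vecMul S hS]
  have h : ∀ w : Fin n → ℂ,
      -((w ᵥ* S) ⬝ᵥ M *ᵥ star (w ᵥ* S)) + a ⬝ᵥ star (w ᵥ* S) + (w ᵥ* S) ⬝ᵥ b =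
      -(w ⬝ᵥ diagonal c *ᵥ star w) + (a ᵥ* Sᴴ) ⬝ᵥ star w + w ⬝ᵥ (S *ᵥ b) := by
    intro w
    rw [← hD, star_vecMul, dotProduct_mulVec w S, dotProduct_mulVec a Sᴴ, mulVec_mulVec,
      ← dotProduct_mulVec w S, mulVec_mulVec, mul_assoc]
  simp_rw [h]
  rw [integral_cexp_diagonal hc, ← hD, det_mul, det_mul, det_conjTranspose, ← mul_assoc]
  have hM0 := det_ne_zero_of_re_pos hM
  congr 1
  · have : star S.det ≠ 0 := by simpa using hS
    field_simp
  · rw [Matrix.mul_inv_rev, Matrix.mul_inv_rev, ← dotProduct_mulVec, mulVec_mulVec, mulVec_mulVec]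
    congr 3
    rw [mul_assoc, mul_assoc, mul_assoc, nonsing_inv_mul _ hS', mul_one, ← mul_assoc,
      mul_nonsing_inv _ hSH, one_mul]

/-- convolution of normalized complex Gaussian densities:
`∫ μ_A(u−v) μ_B(v) dv = μ_C(u)` where `C⁻¹ = A⁻¹ + B⁻¹`. -/
theorem gaussian_convolution (n : ℕ) (A B C : Matrix (Fin n) (Fin n) ℂ)
    (hA : ∀ φ : Fin n → ℂ, φ ≠ 0 →
      0 < (∑ x, ∑ y, φ x * A x y * (starRingEnd ℂ) (φ y)).re)
    (hB : ∀ φ : Fin n → ℂ, φ ≠ 0 →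
      0 < (∑ x, ∑ y, φ x * B x y * (starRingEnd ℂ) (φ y)).re)
    (hU : IsUnit (A⁻¹ + B⁻¹)) (hC : C = (A⁻¹ + B⁻¹)⁻¹) :
    ∀ u : Fin n → ℂ,
      ∫ v : Fin n → ℂ, gaussDensity n A (u - v) * gaussDensity n B v = gaussDensity n C u := by
  intro u
  simp only [form_eq] at hA hB
  have hM : ∀ φ : Fin n → ℂ, φ ≠ 0 → 0 < (φ ⬝ᵥ (A + B) *ᵥ star φ).re := fun φ hφ => by
    rw [add_mulVec, dotProduct_add, Complex.add_re]
    exact add_pos (hA φ hφ) (hB φ hφ)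
  have hA0 := det_ne_zero_of_re_pos hA
  have hB0 := det_ne_zero_of_re_pos hB
  have hM0 := det_ne_zero_of_re_pos hM
  have hCeq : C = A * (A + B)⁻¹ * B := by
    have hsum : A⁻¹ + B⁻¹ = B⁻¹ * (A + B) * A⁻¹ := by
      rw [mul_add, add_mul, mul_assoc, mul_nonsing_inv _ hA0.isUnit, mul_one,
        nonsing_inv_mul _ hB0.isUnit, one_mul, add_comm]
    rw [hC, hsum, Matrix.mul_inv_rev, Matrix.mul_inv_rev, nonsing_inv_nonsing_inv _ hA0.isUnit,
      nonsing_inv_nonsing_inv _ hB0.isUnit, mul_assoc]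
  have hCeq' : C = A - A * (A + B)⁻¹ * A := by
    rw [hCeq, eq_sub_iff_add_eq, ← mul_add, add_comm B, mul_assoc,
      nonsing_inv_mul _ hM0.isUnit, mul_one]
  have hdet : C.det = A.det * B.det / (A + B).det := by
    rw [hCeq, det_mul, det_mul, det_nonsing_inv, Ring.inverse_eq_inv']
    ring
  -- Expanding the exponent separates a Gaussian in `v` with matrix `A + B` and linear terms.
  have h : ∀ v : Fin n → ℂ, gaussDensity n A (u - v) * gaussDensity n B v =
      (A.det / (π : ℂ) ^ n * (B.det / (π : ℂ) ^ n) * cexp (-(u ⬝ᵥ A *ᵥ star u))) *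
        cexp (-(v ⬝ᵥ (A + B) *ᵥ star v) + (u ᵥ* A) ⬝ᵥ star v + v ⬝ᵥ (A *ᵥ star u)) := by
    intro v
    simp only [gaussDensity, form_eq]
    rw [mul_mul_mul_comm, ← Complex.exp_add, mul_assoc _ (cexp _), ← Complex.exp_add]
    congr 2
    simp only [star_sub, mulVec_sub, sub_dotProduct, dotProduct_sub, add_mulVec, dotProduct_add,
      ← dotProduct_mulVec]
    ring
  simp_rw [h]
  rw [integral_const_mul, integral_cexp_matrix hM, gaussDensity, form_eq, hdet, hCeq',
    sub_mulVec, dotProduct_sub, neg_sub, sub_eq_neg_add, Complex.exp_add, ← dotProduct_mulVec,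
    mulVec_mulVec, mulVec_mulVec]
  have hπ : (π : ℂ) ≠ 0 := by exact_mod_cast Real.pi_ne_zero
  simp only [mul_assoc]
  field_simp
end

section
/- Every smooth even supersymmetric differential form ω on ℂ (with Qω = 0, where Q = d + i_X and X generates the flow φ ↦ e^{-2πit}φ) is of the form ω = f(τ) for a smooth function f, where τ = φφ̄ + (2πi)⁻¹ dφ ∧ dφ̄. Concretely: if ω = a(φ) + b(φ) dφ∧dφ̄ satisfies a_φ = 2πi φ̄ b and a_{φ̄} = 2πi φ b, then there is a smooth f with a(φ) = f(φφ̄) and b(φ) = (2πi)⁻¹ f'(φφ̄). -/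
/-!
The two equations say that the real differential of `a` at `z` is
`v ↦ 2πi b(z) (z̄ v + z v̄)`. It vanishes on the tangent vector `v = i z` of the circle through `z`,
so `a` is constant on circles centred at the origin (`radial_of_susy`), and `g(x) = a(x)`, `x ∈ ℝ`,
is a smooth even function. By Whitney's theorem (`whitney_even`), `g(x) = f(x²)` with `f` smooth on
all of `ℝ`; hence `a(z) = f(|z|²)`. Differentiating in the radial direction gives
`2πi b(z) = f'(|z|²)` for `z ≠ 0`, and both sides are continuous at the origin.

Whitney's theorem rests on two facts. First, for `g` smooth and even,
`g'(x) / (2x) = ½ ∫₀¹ g''(s x) ds` is again smooth and even (`exists_even_quotient`). Iterating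
gives `g = G₀, G₁, G₂, …` with `Gₙ(√t)` having derivative `Gₙ₊₁(√t)` for `t > 0`. Second, Borel's
lemma (`borel_lemma`) supplies a smooth `h` whose `n`-th derivative at `0` is `Gₙ(0)`. Gluing
`g(√t)` on `t ≥ 0` to `h` on `t < 0` is smooth: the glued `n`-th derivatives are continuous, and each
is the derivative of the preceding one away from `0`, hence also at `0`.
-/

open scoped Real
open Complex

/-- The Wirtinger derivative `∂/∂φ` of a function on `ℂ`. -/
noncomputable def wirtinger (a : ℂ → ℂ) (z : ℂ) : ℂ :=
  (fderiv ℝ a z 1 - Complex.I * fderiv ℝ a z Complex.I) / 2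

/-- The conjugate Wirtinger derivative `∂/∂φ̄` of a function on `ℂ`. -/
noncomputable def wirtingerBar (a : ℂ → ℂ) (z : ℂ) : ℂ :=
  (fderiv ℝ a z 1 + Complex.I * fderiv ℝ a z Complex.I) / 2

/-! ### Borel's lemma -/

lemma iteratedDeriv_scaled {u : ℝ → ℂ} (hu : ContDiff ℝ (⊤ : ℕ∞) u) (A : ℂ) (l : ℝ)
    (k : ℕ) (t : ℝ) :
    iteratedDeriv k (fun t => A * u (l * t)) t = A * ((l : ℂ) ^ k * iteratedDeriv k u (l * t)) := by
  have h1 : ContDiff ℝ k (fun t : ℝ => u (l * t)) := by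
    have : ContDiff ℝ (⊤ : ℕ∞) (fun t : ℝ => u (l * t)) := by fun_prop
    exact this.of_le (mod_cast le_top)
  have h2 : ContDiff ℝ k u := hu.of_le (mod_cast le_top)
  have := iteratedDeriv_const_smul (n := k) (f := fun t : ℝ => u (l * t)) (x := t) h1.contDiffAt A
  have h3 := congrFun (iteratedDeriv_comp_const_smul h2 l) t
  have e : (fun t => A * u (l * t)) = A • (fun t : ℝ => u (l * t)) := rfl
  rw [e, this, h3]
  simp [Complex.real_smul]

lemma iteratedDeriv_ofReal_pow (n k : ℕ) :
    iteratedDeriv k (fun t : ℝ => (t : ℂ) ^ n)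
      = fun t : ℝ => (n.descFactorial k : ℂ) * (t : ℂ) ^ (n - k) := by
  induction k with
  | zero => simp
  | succ k ih =>
    rw [iteratedDeriv_succ, ih]
    funext t
    have := (((hasDerivAt_id t).ofReal_comp).pow (n - k)).const_mul (n.descFactorial k : ℂ)
    refine this.deriv.trans ?_
    rw [Nat.descFactorial_succ]
    simp only [id]
    push_cast
    rw [Nat.sub_sub]
    ring

lemma iteratedDeriv_ofReal_pow_zero (n k : ℕ) :
    iteratedDeriv k (fun t : ℝ => (t : ℂ) ^ n) 0 = if n = k then (n.factorial : ℂ) else 0 := by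
  rw [iteratedDeriv_ofReal_pow]
  rcases lt_trichotomy n k with h | h | h
  · simp [Nat.descFactorial_of_lt h, h.ne]
  · subst h; simp [Nat.descFactorial_self]
  · have : n - k ≠ 0 := by omega
    simp [this, h.ne']

open Filter Topology in
/-- Borel's lemma: every sequence is the sequence of derivatives at `0` of a smooth function, namely
of `∑ cₙ tⁿ χ(lₙ t) / n!`, where `χ` is a bump equal to `1` near `0` and `lₙ` grows fast. -/
theorem borel_lemma (c : ℕ → ℂ) :
    ∃ h : ℝ → ℂ, ContDiff ℝ (⊤ : ℕ∞) h ∧ ∀ n, iteratedDeriv n h 0 = c n := by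
  let χ : ContDiffBump (0 : ℝ) := ⟨1, 2, one_pos, one_lt_two⟩
  let u : ℕ → ℝ → ℂ := fun n t => (t : ℂ) ^ n * ((χ t : ℝ) : ℂ)
  have hu : ∀ n, ContDiff ℝ (⊤ : ℕ∞) (u n) := fun n => by
    have h1 : ContDiff ℝ (⊤ : ℕ∞) (fun t : ℝ => (t : ℂ)) := Complex.ofRealCLM.contDiff
    exact (h1.pow n).mul (Complex.ofRealCLM.contDiff.comp χ.contDiff)
  have hsupp : ∀ n, HasCompactSupport (u n) := fun n => by
    have h1 : HasCompactSupport (fun t => ((χ t : ℝ) : ℂ)) :=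
      χ.hasCompactSupport.comp_left (g := fun x : ℝ => (x : ℂ)) (by simp)
    exact h1.mul_left
  have hbd : ∀ k n, ∃ B, ∀ t, ‖iteratedDeriv k (u n) t‖ ≤ B := fun k n => by
    have h1 := ((hu n).continuous_iteratedFDeriv (m := k)
      (mod_cast le_top)).bounded_above_of_compact_support ((hsupp n).iteratedFDeriv k)
    simpa only [norm_iteratedFDeriv_eq_norm_iteratedDeriv] using h1
  choose B hB using hbd
  have hB0 : ∀ k n, 0 ≤ B k n := fun k n => (norm_nonneg _).trans (hB k n 0)
  -- The dilation `l n` is large enough to make the derivatives of order `< n` smaller than `2⁻ⁿ`.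
  let l : ℕ → ℝ := fun n => 1 + 2 ^ n * ‖c n‖ * ∑ k ∈ Finset.range n, B k n
  have hl : ∀ n, 1 ≤ l n := fun n => by
    have : 0 ≤ ∑ k ∈ Finset.range n, B k n := Finset.sum_nonneg fun k _ => hB0 k n
    simp only [l]
    nlinarith [mul_nonneg (mul_nonneg (pow_nonneg zero_le_two n) (norm_nonneg (c n))) this]
  have hlB : ∀ k n, k < n → ‖c n‖ * B k n ≤ (1 / 2) ^ n * l n := fun k n hk => by
    have h1 : B k n ≤ ∑ k ∈ Finset.range n, B k n :=
      Finset.single_le_sum (f := fun k => B k n) (fun k _ => hB0 k n) (Finset.mem_range.2 hk)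
    have h2 := mul_le_mul_of_nonneg_left h1 (norm_nonneg (c n))
    have h3 : (1 / 2 : ℝ) ^ n * l n = (1 / 2) ^ n + ‖c n‖ * ∑ k ∈ Finset.range n, B k n := by
      have : (1 / 2 : ℝ) ^ n * 2 ^ n = 1 := by rw [← mul_pow]; norm_num
      simp only [l]; linear_combination (‖c n‖ * ∑ k ∈ Finset.range n, B k n) * this
    rw [h3]
    have : (0:ℝ) ≤ (1 / 2) ^ n := by positivity
    linarith
  let A : ℕ → ℂ := fun n => c n / (n.factorial * (l n : ℂ) ^ n)
  let f : ℕ → ℝ → ℂ := fun n t => A n * u n (l n * t)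
  have hf : ∀ n, ContDiff ℝ (⊤ : ℕ∞) (f n) := fun n => by
    have := hu n
    simp only [f]; fun_prop
  have hfk : ∀ n k t, iteratedDeriv k (f n) t =
      A n * ((l n : ℂ) ^ k * iteratedDeriv k (u n) (l n * t)) :=
    fun n k t => iteratedDeriv_scaled (hu n) _ _ _ _
  have hf0 : ∀ n k, iteratedDeriv k (f n) 0 = if n = k then c k else 0 := fun n k => by
    have h1 : u n =ᶠ[𝓝 0] fun t : ℝ => (t : ℂ) ^ n := by
      filter_upwards [χ.eventuallyEq_one] with t ht
      simp [u, ht]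
    rw [hfk, mul_zero, h1.iteratedDeriv_eq, iteratedDeriv_ofReal_pow_zero]
    split_ifs with h
    · subst h
      have h2 : (n.factorial : ℂ) ≠ 0 := mod_cast n.factorial_ne_zero
      have h3 : (l n : ℂ) ≠ 0 := mod_cast (by linarith [hl n] : l n ≠ 0)
      simp only [A]; field_simp
    · simp
  -- Only finitely many `n` fall in the second case, so it does not affect summability.
  let v : ℕ → ℕ → ℝ := fun k n => if k < n then (1 / 2) ^ n else ‖A n‖ * (l n ^ k * B k n)
  have hv : ∀ k, Summable (v k) := fun k => by
    refine (summable_congr_cofinite ?_).1 (summable_geometric_two)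
    rw [Nat.cofinite_eq_atTop]
    filter_upwards [eventually_gt_atTop k] with n hn
    simp [v, hn]
  have hfv : ∀ k n t, ‖iteratedFDeriv ℝ k (f n) t‖ ≤ v k n := fun k n t => by
    have l0 : 0 < l n := by linarith [hl n]
    have h1 : ‖iteratedFDeriv ℝ k (f n) t‖ ≤ ‖A n‖ * (l n ^ k * B k n) := by
      rw [norm_iteratedFDeriv_eq_norm_iteratedDeriv, hfk, norm_mul, norm_mul, norm_pow,
        Complex.norm_real, Real.norm_of_nonneg l0.le]
      gcongr
      exact hB _ _ _
    refine h1.trans ?_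
    simp only [v]
    split_ifs with h
    · have hA : ‖A n‖ ≤ ‖c n‖ / l n ^ n := by
        simp only [A]
        rw [norm_div, norm_mul, norm_pow, Complex.norm_real, Real.norm_of_nonneg l0.le,
          Complex.norm_natCast]
        have : (1 : ℝ) ≤ n.factorial := mod_cast n.factorial_pos
        gcongr
        exact le_mul_of_one_le_left (by positivity) this
      have hp : l n ^ k * l n ≤ l n ^ n := by
        rw [← pow_succ]; exact pow_le_pow_right₀ (hl n) h
      calc ‖A n‖ * (l n ^ k * B k n) ≤ ‖c n‖ / l n ^ n * (l n ^ k * B k n) := by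
            have := hB0 k n
            gcongr
        _ = (‖c n‖ * B k n) * (l n ^ k / l n ^ n) := by ring
        _ ≤ ((1 / 2) ^ n * l n) * (l n ^ k / l n ^ n) := by
            have := hlB k n h
            gcongr
        _ = (1 / 2) ^ n * ((l n ^ k * l n) / l n ^ n) := by ring
        _ ≤ (1 / 2) ^ n * 1 := by
            gcongr
            exact div_le_one_of_le₀ hp (by positivity)
        _ = _ := mul_one _
    · exact le_rfl
  refine ⟨fun t => ∑' n, f n t, contDiff_tsum hf (fun k _ => hv k) (fun k n t _ => hfv k n t), ?_⟩
  intro k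
  rw [iteratedDeriv_eq_iteratedFDeriv, iteratedFDeriv_tsum_apply hf (fun k _ => hv k)
    (fun k n t _ => hfv k n t) (mod_cast le_top), tsum_eq_single k, ← iteratedDeriv_eq_iteratedFDeriv,
    hf0, if_pos rfl]
  intro n hn
  rw [← norm_eq_zero, norm_iteratedFDeriv_eq_norm_iteratedDeriv, hf0, if_neg hn, norm_zero]

/-! ### Division of odd functions by `x` -/

/-- The moment average `∫₀¹ sᵐ G(s x) ds`; differentiating in `x` raises `m` by one and replaces `G` by `G'`. -/
noncomputable def momentAvg (m : ℕ) (G : ℝ → ℂ) (x : ℝ) : ℂ :=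
  ∫ s in (0:ℝ)..1, (s : ℂ) ^ m * G (s * x)

open Filter Topology in
lemma hasDerivAt_momentAvg (m : ℕ) {G : ℝ → ℂ} (hG : ContDiff ℝ (⊤ : ℕ∞) G) (x : ℝ) :
    HasDerivAt (momentAvg m G) (momentAvg (m + 1) (deriv G) x) x := by
  have hG' : Continuous (deriv G) := hG.continuous_deriv (mod_cast le_top)
  have hGc := hG.continuous
  obtain ⟨C, hC⟩ := (isCompact_Icc (a := -(|x| + 1)) (b := |x| + 1)).exists_bound_of_continuousOn
    hG'.continuousOn
  refine (intervalIntegral.hasDerivAt_integral_of_dominated_loc_of_deriv_le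
    (F := fun x s => (s : ℂ) ^ m * G (s * x)) (F' := fun x s => (s : ℂ) ^ (m + 1) * deriv G (s * x))
    (bound := fun _ => C) (Metric.ball_mem_nhds x one_pos) ?_ ?_ ?_ ?_ ?_ ?_).2
  · refine Eventually.of_forall fun y => Continuous.aestronglyMeasurable ?_
    fun_prop
  · apply Continuous.intervalIntegrable; fun_prop
  · apply Continuous.aestronglyMeasurable; fun_prop
  · refine Eventually.of_forall fun s hs y hy => ?_
    rw [Set.uIoc_of_le zero_le_one] at hs
    have hy1 : |y| ≤ |x| + 1 := by
      have : |y - x| < 1 := by simpa [Real.dist_eq] using hy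
      have := abs_add_le (y - x) x
      simp only [sub_add_cancel] at this
      linarith
    have hsy : |s * y| ≤ |x| + 1 := by
      rw [abs_mul, abs_of_pos hs.1]
      exact (mul_le_of_le_one_left (abs_nonneg _) hs.2).trans hy1
    have h1 := hC (s * y) (abs_le.1 hsy)
    rw [norm_mul, norm_pow, Complex.norm_real, Real.norm_of_nonneg hs.1.le]
    exact (mul_le_of_le_one_left (norm_nonneg _) (pow_le_one₀ hs.1.le hs.2)).trans h1
  · exact intervalIntegrable_const
  · refine Eventually.of_forall fun s hs y hy => ?_
    have h1 : HasDerivAt G (deriv G (s * y)) (s * y) :=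
      (hG.differentiable (by simp)).differentiableAt.hasDerivAt
    have h2 : HasDerivAt (fun y : ℝ => s * y) s y := by simpa using (hasDerivAt_id y).const_mul s
    have h3 := (h1.scomp y h2).const_mul ((s : ℂ) ^ m)
    refine h3.congr_deriv ?_
    rw [Complex.real_smul, pow_succ, mul_assoc]

lemma contDiff_deriv_top {G : ℝ → ℂ} (hG : ContDiff ℝ (⊤ : ℕ∞) G) :
    ContDiff ℝ (⊤ : ℕ∞) (deriv G) :=
  (contDiff_infty_iff_deriv.1 hG).2

/-- If each term of a sequence of functions is the derivative of the previous one, all are smooth. -/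
lemma contDiff_of_derivSeq {F : ℕ → ℝ → ℂ} (hF : ∀ n t, HasDerivAt (F n) (F (n + 1) t) t) (n : ℕ) :
    ContDiff ℝ (⊤ : ℕ∞) (F n) := by
  refine contDiff_infty.2 fun m => ?_
  induction m generalizing n with
  | zero =>
    exact contDiff_zero.2 (continuous_iff_continuousAt.2 fun t => (hF n t).continuousAt)
  | succ m ih =>
    have : deriv (F n) = F (n + 1) := funext fun t => (hF n t).deriv
    refine (contDiff_succ_iff_deriv (n := (m : WithTop ℕ∞))).2
      ⟨fun t => (hF n t).differentiableAt, by simp, ?_⟩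
    rw [this]
    exact ih (n + 1)

lemma contDiff_momentAvg (m : ℕ) {G : ℝ → ℂ} (hG : ContDiff ℝ (⊤ : ℕ∞) G) :
    ContDiff ℝ (⊤ : ℕ∞) (momentAvg m G) := by
  have hs : ∀ n, ContDiff ℝ (⊤ : ℕ∞) (iteratedDeriv n G) := fun n => by
    induction n with
    | zero => simpa using hG
    | succ n ih => rw [iteratedDeriv_succ]; exact contDiff_deriv_top ih
  have := contDiff_of_derivSeq (F := fun n => momentAvg (m + n) (iteratedDeriv n G))
    (fun n t => by
      have := hasDerivAt_momentAvg (m + n) (hs n) t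
      rwa [← iteratedDeriv_succ] at this) 0
  simpa using this

/-- Division step: for `g` smooth and even, `g'(x) / (2x)` extends to a smooth even function. -/
lemma exists_even_quotient {g : ℝ → ℂ} (hg : ContDiff ℝ (⊤ : ℕ∞) g) (he : ∀ x, g (-x) = g x) :
    ∃ k : ℝ → ℂ, (ContDiff ℝ (⊤ : ℕ∞) k ∧ ∀ x, k (-x) = k x) ∧
      ∀ x : ℝ, HasDerivAt g (2 * x * k x) x := by
  have hg1 := contDiff_deriv_top hg
  have hg2 := contDiff_deriv_top hg1
  have hgd : ∀ x, HasDerivAt g (deriv g x) x := fun x =>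
    (hg.differentiable (by simp)).differentiableAt.hasDerivAt
  have hodd : ∀ x, deriv g (-x) = - deriv g x := fun x => by
    have h1 : (fun x => g (-x)) = g := funext he
    have h2 := deriv_comp_neg g x
    rw [h1] at h2
    rw [h2, neg_neg]
  have h0 : deriv g 0 = 0 := by
    have := hodd 0
    rw [neg_zero] at this
    exact self_eq_neg.1 this
  -- Fundamental theorem of calculus for `s ↦ g'(s x)` on `[0, 1]`.
  have key : ∀ x : ℝ, deriv g x = x * momentAvg 0 (deriv (deriv g)) x := fun x => by
    have h1 : ∀ s ∈ Set.uIcc (0:ℝ) 1, HasDerivAt (fun s : ℝ => deriv g (s * x))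
        (x * deriv (deriv g) (s * x)) s := fun s _ => by
      have h1 : HasDerivAt (deriv g) (deriv (deriv g) (s * x)) (s * x) :=
        (hg1.differentiable (by simp)).differentiableAt.hasDerivAt
      have h2 : HasDerivAt (fun s : ℝ => s * x) x s := by simpa using (hasDerivAt_id s).mul_const x
      exact (h1.scomp s h2).congr_deriv (Complex.real_smul ..)
    have hc := hg2.continuous
    have h2 := intervalIntegral.integral_eq_sub_of_hasDerivAt h1
      (Continuous.intervalIntegrable (by fun_prop) _ _)
    rw [intervalIntegral.integral_const_mul] at h2
    simp only [one_mul, zero_mul, h0, sub_zero] at h2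
    simp [momentAvg, h2]
  refine ⟨fun x => momentAvg 0 (deriv (deriv g)) x / 2, ⟨?_, ?_⟩, fun x => ?_⟩
  · exact (contDiff_momentAvg 0 hg2).div_const 2
  · intro x
    rcases eq_or_ne x 0 with rfl | hx
    · simp
    · have h1 := hodd x
      rw [key, key] at h1
      have hx' : (x : ℂ) ≠ 0 := mod_cast hx
      push_cast at h1
      have : momentAvg 0 (deriv (deriv g)) (-x) = momentAvg 0 (deriv (deriv g)) x :=
        mul_left_cancel₀ hx' (by linear_combination -h1)
      simp only [this]
  · refine (hgd x).congr_deriv ?_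
    rw [key]; ring

/-! ### Even functions as functions of the square -/

/-- Whitney's theorem on even functions: a smooth even function of `x` is a smooth function of `x²`,
the latter being defined and smooth on the whole real line. -/
theorem whitney_even {g : ℝ → ℂ} (hg : ContDiff ℝ (⊤ : ℕ∞) g) (he : ∀ x, g (-x) = g x) :
    ∃ f : ℝ → ℂ, ContDiff ℝ (⊤ : ℕ∞) f ∧ ∀ t, 0 ≤ t → f t = g (√t) := by
  choose! K hK hKd using fun (g : ℝ → ℂ) (h : ContDiff ℝ (⊤ : ℕ∞) g ∧ ∀ x, g (-x) = g x) =>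
    exists_even_quotient h.1 h.2
  let G : ℕ → ℝ → ℂ := fun n => K^[n] g
  have hG1 : ∀ n, G (n + 1) = K (G n) := fun n => Function.iterate_succ_apply' K n g
  have hG : ∀ n, ContDiff ℝ (⊤ : ℕ∞) (G n) ∧ ∀ x, G n (-x) = G n x := fun n => by
    induction n with
    | zero => exact ⟨hg, he⟩
    | succ n ih => rw [hG1]; exact hK _ ih
  have hGd : ∀ n (x : ℝ), HasDerivAt (G n) (2 * x * G (n + 1) x) x := fun n x => by
    rw [hG1]; exact hKd _ (hG n) x
  obtain ⟨h, hh, hh0⟩ := borel_lemma fun n => G n 0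
  have hhs : ∀ n, ContDiff ℝ (⊤ : ℕ∞) (iteratedDeriv n h) := fun n => by
    induction n with
    | zero => simpa using hh
    | succ n ih => rw [iteratedDeriv_succ]; exact contDiff_deriv_top ih
  -- `F n` is the candidate for the `n`-th derivative of `F 0`.
  let F : ℕ → ℝ → ℂ := fun n t => if 0 ≤ t then G n (√t) else iteratedDeriv n h t
  have hFc : ∀ n, Continuous (F n) := fun n => by
    refine Continuous.if_le ((hG n).1.continuous.comp Real.continuous_sqrt) (hhs n).continuous
      continuous_const continuous_id fun t ht => ?_
    have ht' : t = 0 := ht.symm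
    simp [ht', hh0]
  have hFne : ∀ n t, t ≠ 0 → HasDerivAt (F n) (F (n + 1) t) t := fun n t ht => by
    rcases lt_or_gt_of_ne ht with ht | ht
    · have h1 : HasDerivAt (iteratedDeriv n h) (iteratedDeriv (n + 1) h t) t := by
        rw [iteratedDeriv_succ]
        exact ((hhs n).differentiable (by simp)).differentiableAt.hasDerivAt
      have h2 : F (n + 1) t = iteratedDeriv (n + 1) h t := if_neg ht.not_ge
      rw [h2]
      refine h1.congr_of_eventuallyEq ?_
      filter_upwards [gt_mem_nhds ht] with s hs
      exact if_neg (not_le.2 hs)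
    · have h1 := (hGd n (√t)).scomp t (Real.hasDerivAt_sqrt ht.ne')
      have h2 : F (n + 1) t = G (n + 1) (√t) := if_pos ht.le
      have hs : ((√t : ℝ) : ℂ) ≠ 0 := mod_cast (Real.sqrt_pos.2 ht).ne'
      have h3 : (1 / (2 * √t)) • (2 * ((√t : ℝ) : ℂ) * G (n + 1) (√t)) = F (n + 1) t := by
        rw [h2, Complex.real_smul]; push_cast; field_simp
      rw [h3] at h1
      refine h1.congr_of_eventuallyEq ?_
      filter_upwards [lt_mem_nhds ht] with s hs
      exact if_pos hs.le
  refine ⟨F 0, contDiff_of_derivSeq (F := F) (fun n t => ?_) 0, fun t ht => if_pos ht⟩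
  rcases eq_or_ne t 0 with rfl | ht
  · exact hasDerivAt_of_hasDerivAt_of_ne (hFne n) (hFc n).continuousAt (hFc (n + 1)).continuousAt
  · exact hFne n t ht

/-! ### Supersymmetric forms -/

/-- The two equations determine the full real differential of `a`. -/
lemma fderiv_of_susy {a b : ℂ → ℂ}
    (hQ1 : ∀ z, wirtinger a z = 2 * (π : ℂ) * Complex.I * (starRingEnd ℂ) z * b z)
    (hQ2 : ∀ z, wirtingerBar a z = 2 * (π : ℂ) * Complex.I * z * b z) (z v : ℂ) :
    fderiv ℝ a z v =
      2 * (π : ℂ) * Complex.I * b z * ((starRingEnd ℂ) z * v + z * (starRingEnd ℂ) v) := by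
  have h1 := hQ1 z
  have h2 := hQ2 z
  simp only [wirtinger, wirtingerBar] at h1 h2
  have hv : fderiv ℝ a z v = v.re * fderiv ℝ a z 1 + v.im * fderiv ℝ a z Complex.I := by
    have e : v = v.re • (1 : ℂ) + v.im • Complex.I := by
      simp [Complex.re_add_im]
    conv_lhs => rw [e]
    rw [map_add, map_smul, map_smul, Complex.real_smul, Complex.real_smul]
  have hI := Complex.I_mul_I
  have e1 : v = v.re + v.im * Complex.I := (Complex.re_add_im v).symm
  have e2 : (starRingEnd ℂ) v = v.re - v.im * Complex.I := by
    apply Complex.ext <;> simp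
  have hvv : fderiv ℝ a z v = (fderiv ℝ a z 1 - Complex.I * fderiv ℝ a z Complex.I) / 2 * v +
      (fderiv ℝ a z 1 + Complex.I * fderiv ℝ a z Complex.I) / 2 * (starRingEnd ℂ) v := by
    rw [hv, e2]
    conv_rhs => rw [e1]
    simp only [Complex.add_re, Complex.ofReal_re, Complex.mul_re, Complex.I_re, Complex.add_im,
      Complex.ofReal_im, Complex.mul_im, Complex.I_im]
    simp only [mul_zero, mul_one, sub_self, add_zero, zero_add]
    linear_combination ((v.im : ℂ) * fderiv ℝ a z Complex.I) * hI
  rw [hvv, h1, h2]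
  ring

/-- `a` is constant on circles: its differential at `z` annihilates `i z`. -/
lemma radial_of_susy {a b : ℂ → ℂ} (ha : ContDiff ℝ (⊤ : ℕ∞) a)
    (hfd : ∀ z v, fderiv ℝ a z v =
      2 * (π : ℂ) * Complex.I * b z * ((starRingEnd ℂ) z * v + z * (starRingEnd ℂ) v))
    (r θ : ℝ) : a (r * Complex.exp (θ * Complex.I)) = a r := by
  have hd : ∀ θ : ℝ, HasDerivAt (fun θ : ℝ => a (r * Complex.exp (θ * Complex.I))) 0 θ := by
    intro θ
    have h1 : HasDerivAt (fun θ : ℝ => (r : ℂ) * Complex.exp (θ * Complex.I))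
        (r * (Complex.exp (θ * Complex.I) * Complex.I)) θ := by
      have h0 : HasDerivAt (fun θ : ℝ => (θ : ℂ) * Complex.I) Complex.I θ := by
        simpa using ((hasDerivAt_id θ).ofReal_comp).mul_const Complex.I
      exact h0.cexp.const_mul _
    have h2 := (ha.differentiable (by simp)
      (r * Complex.exp (θ * Complex.I))).hasFDerivAt.comp_hasDerivAt θ h1
    refine h2.congr_deriv ?_
    rw [hfd]
    simp only [map_mul, Complex.conj_I]
    ring
  have := is_const_of_deriv_eq_zero (fun θ => (hd θ).differentiableAt) (fun θ => (hd θ).deriv) θ 0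
  simpa using this

/-- every smooth even supersymmetric form `ω = a(φ) + b(φ) dφ∧dφ̄` on `ℂ`
(supersymmetry `Qω = 0` being equivalent to the PDEs `a_φ = 2πi φ̄ b`, `a_{φ̄} = 2πi φ b`)
equals `f(τ)` with `τ = φφ̄ + (2πi)⁻¹ dφ∧dφ̄`: there is a smooth `f` with
`a(φ) = f(φφ̄)` and `b(φ) = (2πi)⁻¹ f'(φφ̄)`. -/
theorem susy_even_form_characterization (a b : ℂ → ℂ)
    (ha : ContDiff ℝ (⊤ : ℕ∞) a) (hb : ContDiff ℝ (⊤ : ℕ∞) b)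
    (hQ1 : ∀ z, wirtinger a z = 2 * (π : ℂ) * Complex.I * (starRingEnd ℂ) z * b z)
    (hQ2 : ∀ z, wirtingerBar a z = 2 * (π : ℂ) * Complex.I * z * b z) :
    ∃ f : ℝ → ℂ, ContDiff ℝ (⊤ : ℕ∞) f ∧
      (∀ z : ℂ, a z = f (Complex.normSq z)) ∧
      (∀ z : ℂ, b z = (2 * (π : ℂ) * Complex.I)⁻¹ * deriv f (Complex.normSq z)) := by
  have hfd := fderiv_of_susy hQ1 hQ2
  have hrad := radial_of_susy ha hfd
  have hg : ContDiff ℝ (⊤ : ℕ∞) (fun x : ℝ => a x) := ha.comp Complex.ofRealCLM.contDiff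
  have he : ∀ x : ℝ, a ((-x : ℝ) : ℂ) = a x := fun x => by
    rw [← hrad x π, Complex.exp_pi_mul_I]
    simp
  obtain ⟨f, hf, hfa⟩ := whitney_even hg he
  have haf : ∀ z : ℂ, a z = f (Complex.normSq z) := fun z => by
    rw [hfa _ (Complex.normSq_nonneg z), ← Complex.norm_def, ← hrad ‖z‖ z.arg,
      Complex.norm_mul_exp_arg_mul_I]
  have hpi : (2 * (π : ℂ) * Complex.I) ≠ 0 := Complex.two_pi_I_ne_zero
  refine ⟨f, hf, haf, ?_⟩
  have hne : ∀ z : ℂ, z ≠ 0 → b z = (2 * (π : ℂ) * Complex.I)⁻¹ * deriv f (Complex.normSq z) := by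
    intro z hz
    -- Compare the two radial derivatives of `s ↦ a (s * z) = f (s² |z|²)` at `s = 1`.
    have h1 : HasDerivAt (fun s : ℝ => a (s * z)) (fderiv ℝ a z z) 1 := by
      have h0 : HasDerivAt (fun s : ℝ => (s : ℂ) * z) z 1 := by
        simpa using ((hasDerivAt_id (1 : ℝ)).ofReal_comp).mul_const z
      have h3 : HasFDerivAt a (fderiv ℝ a z) (((1 : ℝ) : ℂ) * z) := by
        simpa using (ha.differentiable (by simp) z).hasFDerivAt
      exact h3.comp_hasDerivAt 1 h0
    have h2 : HasDerivAt (fun s : ℝ => a (s * z))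
        ((2 * Complex.normSq z) • deriv f (Complex.normSq z)) 1 := by
      have h0 : HasDerivAt (fun s : ℝ => s ^ 2 * Complex.normSq z) (2 * Complex.normSq z) 1 := by
        simpa using (hasDerivAt_pow 2 (1 : ℝ)).mul_const (Complex.normSq z)
      have h3 : HasDerivAt f (deriv f (Complex.normSq z)) ((1 : ℝ) ^ 2 * Complex.normSq z) := by
        simpa using (hf.differentiable (by simp) (Complex.normSq z)).hasDerivAt
      have h4 := h3.scomp 1 h0
      refine h4.congr_of_eventuallyEq (Filter.Eventually.of_forall fun s => ?_)
      simp [haf, Complex.normSq_ofReal, sq]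
    have h3 := h1.unique h2
    rw [hfd, mul_comm ((starRingEnd ℂ) z) z, Complex.mul_conj, Complex.real_smul] at h3
    have hn : ((Complex.normSq z : ℝ) : ℂ) ≠ 0 := mod_cast (Complex.normSq_pos.2 hz).ne'
    rw [eq_inv_mul_iff_mul_eq₀ hpi]
    refine mul_left_cancel₀ (mul_ne_zero two_ne_zero hn) ?_
    push_cast at h3
    linear_combination h3
  -- The value at the origin follows by continuity.
  have hfc : Continuous (deriv f) := (contDiff_deriv_top hf).continuous
  have hcont : Continuous fun z : ℂ => (2 * (π : ℂ) * Complex.I)⁻¹ * deriv f (Complex.normSq z) :=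
    continuous_const.mul (hfc.comp Complex.continuous_normSq)
  exact congrFun (Continuous.ext_on (dense_compl_singleton (0 : ℂ)) hb.continuous hcont
    fun z hz => hne z hz)
end

section
/- If a smooth function a: ℂ → ℂ satisfies ∂a/∂φ = 2πi φ̄ b(φ) and ∂a/∂φ̄ = 2πi φ b(φ) for some smooth b, then a is a function of φφ̄ alone, i.e., a(φ) = F(|φ|²) for some smooth F: [0,∞) → ℂ, and b(φ) = (2πi)⁻¹ F'(|φ|²). -/
/-!
The two equations give the real partial derivatives `∂ᵤa = 4πi b u` and `∂ᵥa = 4πi b v`, so the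
angular derivative of `a` vanishes and `a(z) = g(|z|)`, where `g` is the restriction of `a` to the
real axis, an even smooth function.

Whitney's theorem on even functions (`exists_contDiff_eq_comp_sq`) then provides a smooth
`F : ℝ → ℂ` with `g(x) = F(x²)`. Its proof combines two facts.

* If `g` is smooth and even, then `g'(x) = 2x h(x)` with `h` smooth and even (Hadamard's lemma
  applied to `g'`). Iterating produces `G₀ = g, G₁, G₂, …` with `Gₙ' = 2x Gₙ₊₁`, so that
  `t ↦ Gₙ(√t)` is the `n`-th derivative of `t ↦ g(√t)` on `[0, ∞)`.
* Borel's lemma (`exists_contDiff_iteratedDeriv_zero_eq`) gives a smooth function on `ℝ` with the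
  prescribed derivatives `Gₙ(0)` at `0`; its restriction to the negative half-line extends
  `g(√t)` smoothly.

The formula for `b` follows by comparing `∂ᵤ` of both sides of `a(z) = F(|z|²)` where `u ≠ 0`, and
by continuity everywhere.
-/

open scoped Real
open Complex

section Whitney

open Filter Topology Set

/-- A member of a family of functions in which each is the derivative of the previous one is
smooth. -/
lemma contDiff_of_hasDerivAt_succ {H : ℕ → ℝ → ℂ}
    (h : ∀ n t, HasDerivAt (H n) (H (n + 1) t) t) (n : ℕ) : ContDiff ℝ (⊤ : ℕ∞) (H n) := by
  rw [contDiff_infty]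
  intro m
  induction m generalizing n with
  | zero =>
    exact contDiff_zero.2 (continuous_iff_continuousAt.2 fun t => (h n t).continuousAt)
  | succ m ih =>
    have hd : deriv (H n) = H (n + 1) := funext fun t => (h n t).deriv
    have := (contDiff_succ_iff_deriv (𝕜 := ℝ) (n := (m : WithTop ℕ∞)) (f := H n)).2
      ⟨fun t => (h n t).differentiableAt, by simp, hd ▸ ih (n + 1)⟩
    exact_mod_cast this

/-! ### Borel's lemma -/

/-- The model term of Borel's series: a smooth function all of whose derivatives are bounded, and
whose derivatives at `0` all vanish except for the `n`-th, which is `1`. -/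
lemma exists_borel_term (n : ℕ) : ∃ φ : ℝ → ℂ, ContDiff ℝ (⊤ : ℕ∞) φ ∧
    (∀ k, iteratedDeriv k φ 0 = if k = n then 1 else 0) ∧
    ∃ M : ℕ → ℝ, ∀ k s, ‖iteratedDeriv k φ s‖ ≤ M k := by
  let χ : ContDiffBump (0 : ℝ) := ⟨1, 2, by norm_num, by norm_num⟩
  let p : ℝ → ℝ := fun s => (n.factorial : ℝ)⁻¹ * s ^ n
  let φ : ℝ → ℂ := fun s => Complex.ofRealCLM (p s * χ s)
  have hp : ContDiff ℝ (⊤ : ℕ∞) p := contDiff_const.mul (contDiff_id.pow n)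
  have hr : ContDiff ℝ (⊤ : ℕ∞) (fun s => p s * χ s) := hp.mul χ.contDiff
  have hφ : ContDiff ℝ (⊤ : ℕ∞) φ := Complex.ofRealCLM.contDiff.comp hr
  have hsupp : HasCompactSupport φ :=
    (χ.hasCompactSupport.mul_left (f := p)).comp_left (map_zero _)
  refine ⟨φ, hφ, fun k => ?_, ?_⟩
  · have hev : φ =ᶠ[𝓝 0] fun s => ((n.factorial : ℝ)⁻¹ : ℝ) • Complex.ofRealCLM (s ^ n) := by
      filter_upwards [χ.eventuallyEq_one] with s hs
      simp [φ, p, hs]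
    rw [hev.iteratedDeriv_eq, iteratedDeriv_fun_const_smul_field]
    have h2 : iteratedDeriv k (fun s : ℝ => Complex.ofRealCLM (s ^ n)) 0
        = Complex.ofRealCLM (iteratedDeriv k (fun s : ℝ => s ^ n) 0) := by
      have := iteratedDeriv_smul_const (n := k) (x := (0 : ℝ)) (f := fun s : ℝ => s ^ n)
        (contDiff_id.pow n).contDiffAt (1 : ℂ)
      simpa using this
    rw [h2, iteratedDeriv_fun_pow_zero]
    split_ifs <;> simp [Nat.factorial_ne_zero]
  · have : ∀ k, ∃ C, ∀ s, ‖iteratedFDeriv ℝ k φ s‖ ≤ C := fun k =>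
      (hφ.continuous_iteratedFDeriv (m := k)
        (by exact_mod_cast le_top)).bounded_above_of_compact_support
        (hsupp.iteratedFDeriv k)
    choose M hM using this
    exact ⟨M, fun k s => by rw [← norm_iteratedFDeriv_eq_norm_iteratedDeriv]; exact hM k s⟩

/-- **Borel's lemma**: every sequence is the sequence of derivatives at `0` of a smooth
function. -/
lemma exists_contDiff_iteratedDeriv_zero_eq (c : ℕ → ℂ) :
    ∃ B : ℝ → ℂ, ContDiff ℝ (⊤ : ℕ∞) B ∧ ∀ n, iteratedDeriv n B 0 = c n := by
  choose φ hφ hφ0 M hM using exists_borel_term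
  have hM0 : ∀ n k, 0 ≤ M n k := fun n k => (norm_nonneg _).trans (hM n k 0)
  -- The rescaling factor is chosen so that the derivatives of order `k < n` of the `n`-th term
  -- of the series are at most `2⁻ⁿ`.
  let l : ℕ → ℝ := fun n => 1 + 2 ^ n * (‖c n‖ * ∑ k ∈ Finset.range n, M n k)
  have hl1 : ∀ n, 1 ≤ l n := fun n => by
    have : 0 ≤ ∑ k ∈ Finset.range n, M n k := Finset.sum_nonneg fun k _ => hM0 n k
    have : 0 ≤ 2 ^ n * (‖c n‖ * ∑ k ∈ Finset.range n, M n k) := by positivity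
    simp only [l]; linarith
  have hl0 : ∀ n, 0 < l n := fun n => zero_lt_one.trans_le (hl1 n)
  let f : ℕ → ℝ → ℂ := fun n t => (c n * ((l n ^ n)⁻¹ : ℝ)) * φ n (l n * t)
  have hf : ∀ n, ContDiff ℝ (⊤ : ℕ∞) (f n) := fun n =>
    contDiff_const.mul ((hφ n).comp (contDiff_const.mul contDiff_id))
  have hfd : ∀ n k t, iteratedDeriv k (f n) t
      = (c n * ((l n ^ n)⁻¹ : ℝ)) * (l n ^ k • iteratedDeriv k (φ n) (l n * t)) := by
    intro n k t
    simp only [f]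
    rw [iteratedDeriv_const_mul_field,
      iteratedDeriv_comp_const_smul ((hφ n).of_le (by exact_mod_cast le_top))]
  let v : ℕ → ℕ → ℝ := fun k n => ‖c n‖ * (l n ^ n)⁻¹ * (l n ^ k * M n k)
  have hv : ∀ k : ℕ, Summable (v k) := by
    intro k
    refine .of_norm_bounded_eventually_nat (g := fun n => (1 / 2 : ℝ) ^ n)
      summable_geometric_two ?_
    filter_upwards [eventually_gt_atTop k] with n hn
    have hMk : M n k ≤ ∑ k ∈ Finset.range n, M n k :=
      Finset.single_le_sum (f := M n) (fun k _ => hM0 n k) (Finset.mem_range.2 hn)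
    have hlpos := hl0 n
    have h0 : 0 ≤ v k n := by have := hM0 n k; positivity
    rw [Real.norm_of_nonneg h0]
    have h3 : (l n ^ n)⁻¹ * l n ^ k ≤ (l n)⁻¹ := by
      rw [inv_mul_le_iff₀ (by positivity), ← div_eq_mul_inv, le_div_iff₀ hlpos, ← pow_succ]
      exact pow_le_pow_right₀ (hl1 n) hn
    have h4 : 2 ^ n * (‖c n‖ * M n k) ≤ l n := by
      have : 2 ^ n * (‖c n‖ * M n k) ≤ 2 ^ n * (‖c n‖ * ∑ k ∈ Finset.range n, M n k) := by
        gcongr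
      simp only [l]; linarith
    calc v k n = (‖c n‖ * M n k) * ((l n ^ n)⁻¹ * l n ^ k) := by simp only [v]; ring
      _ ≤ (‖c n‖ * M n k) * (l n)⁻¹ := by
        have := hM0 n k
        gcongr
      _ ≤ (1 / 2) ^ n := by
        rw [← div_eq_mul_inv, div_le_iff₀ hlpos, one_div, inv_pow, inv_mul_eq_div,
          le_div_iff₀ (by positivity)]
        linarith
  have hbound : ∀ (k n : ℕ) (t : ℝ), ((k : ℕ∞) ≤ (⊤ : ℕ∞)) →
      ‖iteratedFDeriv ℝ k (f n) t‖ ≤ v k n := by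
    intro k n t _
    have hlpos := hl0 n
    rw [norm_iteratedFDeriv_eq_norm_iteratedDeriv, hfd, norm_mul, norm_mul, norm_smul,
      Complex.norm_real, Real.norm_of_nonneg (by positivity : 0 ≤ (l n ^ n)⁻¹),
      Real.norm_of_nonneg (by positivity : 0 ≤ l n ^ k)]
    simp only [v]
    gcongr
    exact hM n k _
  refine ⟨fun t => ∑' n, f n t, contDiff_tsum hf (fun k _ => hv k) hbound, fun k => ?_⟩
  have hs : Summable fun n => iteratedFDeriv ℝ k (f n) 0 :=
    .of_norm_bounded (hv k) fun n => hbound k n 0 le_top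
  rw [iteratedDeriv_eq_iteratedFDeriv,
    iteratedFDeriv_tsum_apply hf (fun k _ => hv k) hbound (k := k) le_top,
    ContinuousMultilinearMap.tsum_eval hs]
  simp_rw [← iteratedDeriv_eq_iteratedFDeriv, hfd, mul_zero, hφ0]
  rw [tsum_eq_single k fun n hn => by simp [hn.symm]]
  have := (hl0 k).ne'
  simp [this]

/-! ### Hadamard's lemma and even functions -/

/-- The `m`-th derivative of `∫₀¹ k(tx) dt` in `x` is `∫₀¹ tᵐ k⁽ᵐ⁾(tx) dt`. -/
lemma contDiff_integral_comp_mul {k : ℝ → ℂ} (hk : ContDiff ℝ (⊤ : ℕ∞) k) :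
    ContDiff ℝ (⊤ : ℕ∞) fun x : ℝ => ∫ t in (0 : ℝ)..1, k (t * x) := by
  let H : ℕ → ℝ → ℂ := fun m x => ∫ t in (0 : ℝ)..1, (t ^ m : ℝ) • iteratedDeriv m k (t * x)
  have hc : ∀ m, Continuous (iteratedDeriv m k) := fun m =>
    hk.continuous_iteratedDeriv m (by exact_mod_cast le_top)
  have hH : ∀ m x, HasDerivAt (H m) (H (m + 1) x) x := by
    intro m x
    obtain ⟨C, hC⟩ := (isCompact_closedBall (0 : ℝ) (|x| + 1)).exists_bound_of_continuousOn
      (hc (m + 1)).continuousOn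
    have hcont : ∀ (j : ℕ) (y : ℝ),
        Continuous fun t : ℝ => (t ^ j : ℝ) • iteratedDeriv j k (t * y) :=
      fun j y => (continuous_pow j).smul ((hc j).comp (continuous_id.mul continuous_const))
    refine (intervalIntegral.hasDerivAt_integral_of_dominated_loc_of_deriv_le
      (F' := fun y t => (t ^ (m + 1) : ℝ) • iteratedDeriv (m + 1) k (t * y))
      (s := Metric.ball x 1) (bound := fun _ => C)
      (Metric.ball_mem_nhds x one_pos) (Eventually.of_forall fun y =>
        (hcont m y).aestronglyMeasurable) ((hcont m x).intervalIntegrable _ _)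
      (hcont (m + 1) x).aestronglyMeasurable ?_ intervalIntegrable_const ?_).2
    · refine Eventually.of_forall fun t ht y hy => ?_
      rw [uIoc_of_le zero_le_one] at ht
      have hy' : |y| ≤ |x| + 1 := by
        have h1 : |y - x| < 1 := by simpa [Real.dist_eq] using hy
        have h2 : |y| ≤ |y - x| + |x| := by simpa using abs_add_le (y - x) x
        linarith
      have h1 : ‖iteratedDeriv (m + 1) k (t * y)‖ ≤ C := by
        apply hC
        rw [mem_closedBall_zero_iff, Real.norm_eq_abs, abs_mul, abs_of_pos ht.1]
        nlinarith [abs_nonneg y, ht.2]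
      rw [norm_smul, Real.norm_of_nonneg (pow_nonneg ht.1.le _)]
      exact (mul_le_of_le_one_left (norm_nonneg _) (pow_le_one₀ ht.1.le ht.2)).trans h1
    · refine Eventually.of_forall fun t _ y _ => ?_
      have h1 : HasDerivAt (iteratedDeriv m k) (iteratedDeriv (m + 1) k (t * y)) (t * y) := by
        rw [iteratedDeriv_succ]
        exact ((hk.differentiable_iteratedDeriv m
          (by exact_mod_cast ENat.natCast_lt_top m)) _).hasDerivAt
      have h2 : HasDerivAt (fun y : ℝ => t * y) t y := by
        simpa using (hasDerivAt_id y).const_mul t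
      have h3 := (h1.scomp y h2).const_smul (t ^ m)
      rw [smul_smul, ← pow_succ] at h3
      exact h3
  have := contDiff_of_hasDerivAt_succ hH 0
  simpa [H] using this

/-- **Hadamard's lemma** for a smooth function of one real variable vanishing at `0`. -/
lemma exists_contDiff_eq_mul {f : ℝ → ℂ} (hf : ContDiff ℝ (⊤ : ℕ∞) f) (h0 : f 0 = 0) :
    ∃ h : ℝ → ℂ, ContDiff ℝ (⊤ : ℕ∞) h ∧ ∀ x : ℝ, f x = x * h x := by
  have hd := contDiff_infty_iff_deriv.1 hf
  refine ⟨_, contDiff_integral_comp_mul hd.2, fun x => ?_⟩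
  have h1 := intervalIntegral.smul_integral_comp_mul_right (a := 0) (b := 1) (deriv f) x
  rw [Complex.real_smul] at h1
  rw [h1, intervalIntegral.integral_deriv_eq_sub (fun t _ => hd.1 t)
    (hd.2.continuous.intervalIntegrable _ _)]
  simp [h0]

/-- The operator `(2x)⁻¹ d/dx` preserves smooth even functions. -/
lemma exists_even_deriv_eq {g : ℝ → ℂ} (hg : ContDiff ℝ (⊤ : ℕ∞) g) (he : ∀ x, g (-x) = g x) :
    ∃ h : ℝ → ℂ, (ContDiff ℝ (⊤ : ℕ∞) h ∧ ∀ x, h (-x) = h x) ∧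
      ∀ x : ℝ, deriv g x = 2 * x * h x := by
  have hodd : ∀ x, deriv g (-x) = -deriv g x := fun x => by
    have h1 := deriv_comp_neg (f := g) (x := x)
    rw [funext he] at h1
    rw [h1, neg_neg]
  have h0 : deriv g 0 = 0 := by
    have := hodd 0
    rw [neg_zero] at this
    exact self_eq_neg.1 this
  obtain ⟨h, hh, hx⟩ := exists_contDiff_eq_mul (contDiff_infty_iff_deriv.1 hg).2 h0
  refine ⟨fun x => h x / 2, ⟨hh.div_const 2, fun x => ?_⟩, fun x => by rw [hx]; ring⟩
  rcases eq_or_ne x 0 with rfl | hne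
  · simp
  · have h1 := hodd x
    rw [hx, hx] at h1
    have h2 : (x : ℂ) ≠ 0 := by exact_mod_cast hne
    have : h (-x) = h x := by
      apply mul_left_cancel₀ h2
      push_cast at h1
      linear_combination -h1
    simp only [this]

/-- **Whitney's theorem on even functions**: a smooth even function on `ℝ` is a smooth function of
`x²`. -/
lemma exists_contDiff_eq_comp_sq {g : ℝ → ℂ} (hg : ContDiff ℝ (⊤ : ℕ∞) g)
    (he : ∀ x, g (-x) = g x) :
    ∃ F : ℝ → ℂ, ContDiff ℝ (⊤ : ℕ∞) F ∧ ∀ t, 0 ≤ t → F t = g (√t) := by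
  let S := {g : ℝ → ℂ // ContDiff ℝ (⊤ : ℕ∞) g ∧ ∀ x, g (-x) = g x}
  have hS : ∀ g : S, ∃ h : S, ∀ x : ℝ, deriv g.1 x = 2 * x * h.1 x := fun g => by
    obtain ⟨h, hh, hx⟩ := exists_even_deriv_eq g.2.1 g.2.2
    exact ⟨⟨h, hh⟩, hx⟩
  choose D hD using hS
  let G : ℕ → S := fun n => D^[n] ⟨g, hg, he⟩
  have hG : ∀ n (x : ℝ), deriv (G n).1 x = 2 * x * (G (n + 1)).1 x := fun n x => by
    simp only [G, Function.iterate_succ_apply']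
    exact hD _ x
  have hGc : ∀ n, Continuous (G n).1 := fun n => (G n).2.1.continuous
  obtain ⟨B, hB, hB0⟩ := exists_contDiff_iteratedDeriv_zero_eq fun n => (G n).1 0
  have hBd : ∀ n t, HasDerivAt (iteratedDeriv n B) (iteratedDeriv (n + 1) B t) t := fun n t => by
    rw [iteratedDeriv_succ]
    exact ((hB.differentiable_iteratedDeriv n
      (by exact_mod_cast ENat.natCast_lt_top n)) t).hasDerivAt
  -- The chain rule at `t > 0`: the factor `2√t` cancels the derivative `1 / (2√t)` of `√t`.
  have hpos : ∀ n t, 0 < t →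
      HasDerivAt (fun s => (G n).1 (√s)) ((G (n + 1)).1 (√t)) t := fun n t ht => by
    have h1 := ((G n).2.1.differentiable (by simp) (√t)).hasDerivAt.scomp t
      (Real.hasDerivAt_sqrt ht.ne')
    rw [hG, Complex.real_smul] at h1
    have h2 : ((√t : ℝ) : ℂ) ≠ 0 := by exact_mod_cast (Real.sqrt_pos.2 ht).ne'
    refine h1.congr_deriv ?_
    push_cast
    field_simp
  let H : ℕ → ℝ → ℂ := fun n t => if 0 ≤ t then (G n).1 (√t) else iteratedDeriv n B t
  have hH : ∀ n t, HasDerivAt (H n) (H (n + 1) t) t := by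
    intro n t
    rcases lt_trichotomy t 0 with ht | rfl | ht
    · have : H n =ᶠ[𝓝 t] iteratedDeriv n B := by
        filter_upwards [Iio_mem_nhds ht] with s hs
        simp [H, not_le.2 (show s < 0 from hs)]
      simpa [H, not_le.2 ht] using (hBd n t).congr_of_eventuallyEq this
    · have hval : H (n + 1) 0 = (G (n + 1)).1 0 := by simp [H]
      rw [hval]
      have hleft : HasDerivWithinAt (H n) ((G (n + 1)).1 0) (Iic 0) 0 := by
        have h1 := (hBd n 0).hasDerivWithinAt (s := Iic 0)
        rw [hB0] at h1
        refine h1.congr (fun s hs => ?_) (by simp [H, hB0])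
        rcases (show s ≤ 0 from hs).lt_or_eq with hs | rfl
        · simp [H, not_le.2 hs]
        · simp [H, hB0]
      have hright : HasDerivWithinAt (H n) ((G (n + 1)).1 0) (Ici 0) 0 := by
        have h1 : HasDerivWithinAt (fun s => (G n).1 (√s)) ((G (n + 1)).1 0) (Ici 0) 0 := by
          refine hasDerivWithinAt_Ici_of_tendsto_deriv (s := Ioi 0)
            (fun s hs => (hpos n s hs).differentiableAt.differentiableWithinAt)
            ((hGc n).comp Real.continuous_sqrt).continuousWithinAt self_mem_nhdsWithin ?_
          have h2 : Tendsto (fun s => (G (n + 1)).1 (√s)) (𝓝[>] 0) (𝓝 ((G (n + 1)).1 0)) := by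
            have := ((hGc (n + 1)).comp Real.continuous_sqrt).tendsto 0
            simp only [Function.comp_apply, Real.sqrt_zero] at this
            exact this.mono_left nhdsWithin_le_nhds
          refine h2.congr' ?_
          filter_upwards [self_mem_nhdsWithin] with s hs
          exact (hpos n s hs).deriv.symm
        exact h1.congr (fun s hs => by simp [H, show 0 ≤ s from hs]) (by simp [H])
      have := hleft.union hright
      rwa [Iic_union_Ici, hasDerivWithinAt_univ] at this
    · have : H n =ᶠ[𝓝 t] fun s => (G n).1 (√s) := by
        filter_upwards [Ioi_mem_nhds ht] with s hs
        simp [H, (show 0 < s from hs).le]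
      simpa [H, ht.le] using (hpos n t ht).congr_of_eventuallyEq this
  exact ⟨H 0, contDiff_of_hasDerivAt_succ hH 0, fun t ht => by simp [H, ht, G]⟩

/-! ### Radial functions on the plane -/

/-- A function whose gradient is everywhere radial depends only on the absolute value. -/
lemma eq_apply_norm_of_fderiv_radial {a β : ℂ → ℂ} (ha : Differentiable ℝ a)
    (h1 : ∀ z, fderiv ℝ a z 1 = z.re * β z) (h2 : ∀ z, fderiv ℝ a z Complex.I = z.im * β z)
    (z : ℂ) : a z = a ‖z‖ := by
  let γ : ℝ → ℂ := fun θ => ‖z‖ * Complex.exp (θ * Complex.I)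
  have hγ : ∀ θ, HasDerivAt γ (γ θ * Complex.I) θ := fun θ => by
    have h3 : HasDerivAt (fun θ : ℝ => (θ : ℂ) * Complex.I) Complex.I θ := by
      simpa using (Complex.ofRealCLM.hasDerivAt (x := θ)).mul_const Complex.I
    have := h3.cexp.const_mul (‖z‖ : ℂ)
    simpa [γ, mul_assoc] using this
  have hd : ∀ θ, HasDerivAt (a ∘ γ) 0 θ := fun θ => by
    have h3 := (ha (γ θ)).hasFDerivAt.comp_hasDerivAt θ (hγ θ)
    have h4 : γ θ * Complex.I = (-(γ θ).im) • (1 : ℂ) + (γ θ).re • Complex.I := by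
      apply Complex.ext <;> simp
    rw [h4, map_add, map_smul, map_smul, h1, h2] at h3
    refine h3.congr_deriv ?_
    simp only [Complex.real_smul]
    push_cast
    ring
  have := is_const_of_deriv_eq_zero (fun θ => (hd θ).differentiableAt) (fun θ => (hd θ).deriv)
    z.arg 0
  simpa [γ, Complex.norm_mul_exp_arg_mul_I] using this

end Whitney

/-- if a smooth `a : ℂ → ℂ` satisfies `∂a/∂φ = 2πi φ̄ b` and
`∂a/∂φ̄ = 2πi φ b` for a smooth `b`, then `a(φ) = F(|φ|²)` for a smooth `F` and
`b(φ) = (2πi)⁻¹ F'(|φ|²)`. -/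
theorem susy_function_characterization (a b : ℂ → ℂ)
    (ha : ContDiff ℝ (⊤ : ℕ∞) a) (hb : ContDiff ℝ (⊤ : ℕ∞) b)
    (h1 : ∀ z, wirtinger a z = 2 * (π : ℂ) * Complex.I * (starRingEnd ℂ) z * b z)
    (h2 : ∀ z, wirtingerBar a z = 2 * (π : ℂ) * Complex.I * z * b z) :
    ∃ F : ℝ → ℂ, ContDiff ℝ (⊤ : ℕ∞) F ∧
      (∀ z : ℂ, a z = F (Complex.normSq z)) ∧
      (∀ z : ℂ, b z = (2 * (π : ℂ) * Complex.I)⁻¹ * deriv F (Complex.normSq z)) := by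
  have hre : ∀ z, fderiv ℝ a z 1 = z.re * (4 * (π : ℂ) * Complex.I * b z) := fun z => by
    have e1 := h1 z
    have e2 := h2 z
    have e3 := Complex.add_conj z
    simp only [wirtinger, wirtingerBar] at e1 e2
    push_cast at e3
    linear_combination e1 + e2 + (2 * (π : ℂ) * Complex.I * b z) * e3
  have him : ∀ z, fderiv ℝ a z Complex.I = z.im * (4 * (π : ℂ) * Complex.I * b z) := fun z => by
    have e1 := h1 z
    have e2 := h2 z
    have e3 := Complex.sub_conj z
    simp only [wirtinger, wirtingerBar] at e1 e2
    push_cast at e3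
    apply mul_left_cancel₀ Complex.I_ne_zero
    linear_combination e2 - e1 + (2 * (π : ℂ) * Complex.I * b z) * e3
  have hda : Differentiable ℝ a := ha.differentiable (by simp)
  have hrad := eq_apply_norm_of_fderiv_radial hda hre him
  have hg : ContDiff ℝ (⊤ : ℕ∞) fun x : ℝ => a x := ha.comp Complex.ofRealCLM.contDiff
  have heven : ∀ x : ℝ, a ((-x : ℝ) : ℂ) = a x := fun x => by
    rw [hrad, hrad x, Complex.ofReal_neg, norm_neg]
  obtain ⟨F, hF, hFg⟩ := exists_contDiff_eq_comp_sq hg heven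
  have haF : ∀ z : ℂ, a z = F (Complex.normSq z) := fun z => by
    rw [hFg _ (Complex.normSq_nonneg z), hrad z]
    rfl
  refine ⟨F, hF, haF, ?_⟩
  have hF' : Continuous (deriv F) := (contDiff_infty_iff_deriv.1 hF).2.continuous
  have hdense : Dense {z : ℂ | z.re ≠ 0} :=
    (dense_compl_singleton (0 : ℝ)).preimage Complex.isOpenMap_re
  refine fun z => congrFun (Continuous.ext_on hdense hb.continuous
    (continuous_const.mul (hF'.comp Complex.continuous_normSq)) fun w hw => ?_) z
  have d1 : HasDerivAt (fun t : ℝ => a (w + t)) (fderiv ℝ a w 1) 0 := by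
    have h3 : HasDerivAt (fun t : ℝ => w + (t : ℂ)) 1 0 := by
      simpa using (Complex.ofRealCLM.hasDerivAt (x := 0)).const_add w
    have h4 : HasFDerivAt a (fderiv ℝ a w) (w + ((0 : ℝ) : ℂ)) := by
      simpa using (hda w).hasFDerivAt
    exact h4.comp_hasDerivAt 0 h3
  have d2 : HasDerivAt (fun t : ℝ => a (w + t))
      ((2 * w.re) • deriv F (Complex.normSq w)) 0 := by
    have h3 : HasDerivAt (fun t : ℝ => Complex.normSq (w + t)) (2 * w.re) 0 := by
      have h5 := (((hasDerivAt_id (0 : ℝ)).const_add w.re).pow 2).add_const (w.im ^ 2)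
      refine (h5.congr_deriv (by simp)).congr_of_eventuallyEq (.of_forall fun t => ?_)
      simp [Complex.normSq_apply, pow_two]
    have h4 : HasDerivAt F (deriv F (Complex.normSq w))
        (Complex.normSq (w + ((0 : ℝ) : ℂ))) := by
      simpa using (hF.differentiable (by simp) (Complex.normSq w)).hasDerivAt
    simp_rw [haF]
    exact h4.scomp 0 h3
  have key := d1.unique d2
  rw [hre, Complex.real_smul] at key
  have hw' : (w.re : ℂ) ≠ 0 := by exact_mod_cast hw
  have hπ : (2 * (π : ℂ) * Complex.I) ≠ 0 := Complex.two_pi_I_ne_zero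
  change b w = (2 * (π : ℂ) * Complex.I)⁻¹ * deriv F (Complex.normSq w)
  rw [eq_inv_mul_iff_mul_eq₀ hπ]
  apply mul_left_cancel₀ (mul_ne_zero two_ne_zero hw')
  push_cast at key
  linear_combination key
end
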